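/- Li₃(1/3) + (1/4)·Li₃(1/4) + Li₃(2/3) = (15/8)·ζ(3) + (1/6)·(log 2)³ − (π²/12)·log 2 − (1/6)·(log(3/2))³ + (1/2)·log 3·(log(3/2))² − (π²/6)·log(3/2). -/

import Mathlib

/-!
Landen's three-term identity for the trilogarithm says, for `1/2 ≤ z ≤ 1`,
`Li₃(z) + Li₃(1-z) + Li₃(1-1/z) = ζ(3) + log³z/6 + (π²/6) log z - (1/2) log²z log(1-z)`
(`polyLi_three_landen`). It is proved by differentiation: both sides agree at `z = 1`, and the
derivatives agree because of the analogous identities for the dilogarithm (`polyLi_two_reflection`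
and `polyLi_two_landen`), which are in turn proved by differentiation from `Li₁(x) = -log(1-x)`.

The duplication formula `Li₃(x²) = 4(Li₃(x) + Li₃(-x))` at `x = 1` gives `Li₃(-1) = -(3/4)ζ(3)`,
so Landen's identity at `z = 1/2` evaluates `Li₃(1/2)`. At `x = 1/2` duplication gives
`Li₃(1/4)/4 = Li₃(1/2) + Li₃(-1/2)`, and Landen's identity at `z = 2/3` evaluates
`Li₃(2/3) + Li₃(1/3) + Li₃(-1/2)`. Adding the two yields the theorem.
-/

open Real

/-- The Riemann zeta function, as a real-valued function of a real argument. -/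
noncomputable def zetaR (s : ℝ) : ℝ := (riemannZeta s).re

/-- The trilogarithm `Li₃(x) = ∑_{n=1}^∞ xⁿ/n³` for real `x`. -/
noncomputable def Li3 (x : ℝ) : ℝ := ∑' n : ℕ, x ^ (n + 1) / (n + 1) ^ 3

/-- The polylogarithm series `∑_{n ≥ 1} xⁿ/nᵏ`, indexed from `n = 0` with a shift; it is meaningful
for `|x| < 1`, and for `|x| ≤ 1` when `k ≥ 2`. -/
noncomputable def polyLi (k : ℕ) (x : ℝ) : ℝ := ∑' n : ℕ, x ^ (n + 1) / (n + 1) ^ k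

lemma summable_one_div_succ_pow {k : ℕ} (hk : 2 ≤ k) :
    Summable (fun n : ℕ => (1 : ℝ) / ((n : ℝ) + 1) ^ k) := by
  have h := (summable_nat_add_iff 1).mpr (Real.summable_one_div_nat_pow.mpr (show 1 < k by omega))
  simpa using h

lemma norm_polyLi_term_le {k : ℕ} {x : ℝ} (hx : |x| ≤ 1) (n : ℕ) :
    ‖x ^ (n + 1) / ((n : ℝ) + 1) ^ k‖ ≤ 1 / ((n : ℝ) + 1) ^ k := by
  have hp : (0 : ℝ) < ((n : ℝ) + 1) ^ k := by positivity
  rw [norm_div, norm_pow, Real.norm_eq_abs, Real.norm_eq_abs, abs_of_pos hp]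
  have := pow_le_one₀ (n := n + 1) (abs_nonneg x) hx
  gcongr

lemma summable_polyLi {k : ℕ} (hk : 2 ≤ k) {x : ℝ} (hx : |x| ≤ 1) :
    Summable (fun n : ℕ => x ^ (n + 1) / ((n : ℝ) + 1) ^ k) :=
  .of_norm_bounded (summable_one_div_succ_pow hk) (norm_polyLi_term_le hx)

lemma continuousOn_polyLi {k : ℕ} (hk : 2 ≤ k) : ContinuousOn (polyLi k) (Set.Icc (-1) 1) :=
  continuousOn_tsum (fun n => by fun_prop) (summable_one_div_succ_pow hk)
    (fun n _ hx => norm_polyLi_term_le (abs_le.mpr hx) n)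

lemma polyLi_zero_right (k : ℕ) : polyLi k 0 = 0 := by
  simp [polyLi]

lemma polyLi_one_left {x : ℝ} (hx : |x| < 1) : polyLi 1 x = -log (1 - x) := by
  have h := (Real.hasSum_pow_div_log_of_abs_lt_one hx).tsum_eq
  simpa [polyLi] using h

lemma polyLi_two_one : polyLi 2 1 = π ^ 2 / 6 := by
  have h := (hasSum_nat_add_iff' 1).mpr hasSum_zeta_two
  simpa [polyLi] using h.tsum_eq

lemma polyLi_three_one : polyLi 3 1 = zetaR 3 := by
  have h := zeta_nat_eq_tsum_of_gt_one (k := 3) (by norm_num)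
  have hs := Real.summable_one_div_nat_pow.mpr (show 1 < 3 by norm_num)
  have h2 : ∑' n : ℕ, (1 : ℝ) / (n : ℝ) ^ 3 = polyLi 3 1 := by
    rw [hs.tsum_eq_zero_add]
    simp [polyLi]
  have h3 : riemannZeta ((3 : ℝ) : ℂ) = ((polyLi 3 1 : ℝ) : ℂ) := by
    rw [← h2]
    push_cast
    exact_mod_cast h
  rw [zetaR, h3, Complex.ofReal_re]

lemma hasDerivAt_polyLi {k : ℕ} {x : ℝ} (hx : |x| < 1) (hx0 : x ≠ 0) :
    HasDerivAt (polyLi (k + 1)) (polyLi k x / x) x := by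
  -- Differentiate termwise on `(-r, r)`, where the derivatives are dominated by `rⁿ`.
  obtain ⟨r, hxr, hr1⟩ := exists_between hx
  have hr0 : 0 < r := (abs_nonneg x).trans_lt hxr
  have key := hasDerivAt_tsum_of_isPreconnected (𝕜 := ℝ)
    (g := fun (n : ℕ) (y : ℝ) => y ^ (n + 1) / ((n : ℝ) + 1) ^ (k + 1))
    (g' := fun (n : ℕ) (y : ℝ) => y ^ n / ((n : ℝ) + 1) ^ k)
    (u := fun n => r ^ n) (t := Set.Ioo (-r) r) (y₀ := 0) (y := x)
    (summable_geometric_of_lt_one hr0.le hr1) isOpen_Ioo isPreconnected_Ioo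
    (fun n y _ => by
      have h := (hasDerivAt_pow (n + 1) y).div_const (((n : ℝ) + 1) ^ (k + 1))
      refine h.congr_deriv ?_
      have : (n : ℝ) + 1 ≠ 0 := by positivity
      push_cast
      field_simp
      ring)
    (fun n y hy => by
      have hp : (1 : ℝ) ≤ ((n : ℝ) + 1) ^ k := one_le_pow₀ (by linarith [n.cast_nonneg (α := ℝ)])
      rw [norm_div, norm_pow, Real.norm_eq_abs y, Real.norm_eq_abs, abs_of_pos (one_pos.trans_le hp)]
      exact (div_le_self (by positivity) hp).trans
        (pow_le_pow_left₀ (abs_nonneg y) (abs_lt.mpr hy).le n))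
    (by simp [hr0]) (by simp) (abs_lt.mp hxr)
  refine key.congr_deriv ?_
  unfold polyLi
  rw [← tsum_div_const]
  refine tsum_congr fun n => ?_
  field_simp
  ring

lemma polyLi_three_sq {x : ℝ} (hx : |x| ≤ 1) :
    polyLi 3 (x ^ 2) = 4 * (polyLi 3 x + polyLi 3 (-x)) := by
  have h1 := summable_polyLi (k := 3) (by norm_num) hx
  have h2 := summable_polyLi (k := 3) (x := -x) (by norm_num) (by rwa [abs_neg])
  -- The index shift makes the terms at even indices the odd powers, which cancel.
  have he : ∀ n : ℕ, x ^ (2 * n + 1) / (((2 * n : ℕ) : ℝ) + 1) ^ 3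
      + (-x) ^ (2 * n + 1) / (((2 * n : ℕ) : ℝ) + 1) ^ 3 = 0 := fun n => by
    rw [(odd_two_mul_add_one n).neg_pow]
    ring
  have ho : ∀ n : ℕ, x ^ (2 * n + 1 + 1) / (((2 * n + 1 : ℕ) : ℝ) + 1) ^ 3
      + (-x) ^ (2 * n + 1 + 1) / (((2 * n + 1 : ℕ) : ℝ) + 1) ^ 3
        = 1 / 4 * ((x ^ 2) ^ (n + 1) / ((n : ℝ) + 1) ^ 3) := fun n => by
    have hev : Even (2 * n + 1 + 1) := ⟨n + 1, by ring⟩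
    rw [hev.neg_pow, ← pow_mul, show 2 * n + 1 + 1 = 2 * (n + 1) by ring]
    have : (n : ℝ) + 1 ≠ 0 := by positivity
    push_cast
    rw [show (2 * (n : ℝ) + 1 + 1) = 2 * (n + 1) by ring]
    field_simp
    ring
  have hx2 : |x ^ 2| ≤ 1 := by
    rw [abs_pow]
    exact pow_le_one₀ (abs_nonneg x) hx
  have hs := (summable_polyLi (k := 3) (by norm_num) hx2).hasSum.mul_left (1 / 4)
  have hsum := HasSum.even_add_odd (f := fun n : ℕ => x ^ (n + 1) / ((n : ℝ) + 1) ^ 3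
      + (-x) ^ (n + 1) / ((n : ℝ) + 1) ^ 3)
    (by simp only [he]; exact hasSum_zero) (by simp only [ho]; exact hs)
  have h := hsum.unique (h1.hasSum.add h2.hasSum)
  change 0 + 1 / 4 * polyLi 3 (x ^ 2) = polyLi 3 x + polyLi 3 (-x) at h
  linarith

lemma eq_at_one_of_hasDerivAt_zero {f : ℝ → ℝ} {z : ℝ} (hz : z ≤ 1)
    (hc : ContinuousOn f (Set.Icc z 1)) (hd : ∀ x ∈ Set.Ioo z 1, HasDerivAt f 0 x) :
    f z = f 1 := by
  rcases hz.eq_or_lt with rfl | hlt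
  · rfl
  obtain ⟨c, -, h⟩ := exists_hasDerivAt_eq_slope f (fun _ => 0) hlt hc hd
  have h1 : 1 - z ≠ 0 := by linarith
  field_simp at h
  linarith

/-- The zero of `log z` at `z = 1` absorbs the singularity of `log (1 - z)`; the junk value
`log 0 = 0` agrees with the limit of the product. -/
lemma continuousOn_log_mul_log_one_sub :
    ContinuousOn (fun z : ℝ => log z * log (1 - z)) (Set.Ioi 0) := by
  have hs : ContinuousOn (dslope log 1) (Set.Ioi 0) :=
    (continuousOn_dslope (Ioi_mem_nhds one_pos)).mpr
      ⟨continuousOn_log.mono fun x hx => (ne_of_gt hx : x ≠ 0), differentiableAt_log one_ne_zero⟩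
  have hm : Continuous (fun z : ℝ => (1 - z) * log (1 - z)) :=
    Real.continuous_mul_log.comp (by fun_prop : Continuous fun z : ℝ => 1 - z)
  refine (hs.mul hm.continuousOn).neg.congr fun z _ => ?_
  have h := sub_smul_dslope log 1 z
  simp only [smul_eq_mul, log_one, sub_zero] at h
  simp only [← h, Pi.mul_apply, Pi.neg_apply]
  ring

lemma continuousOn_polyLi_one_sub {k : ℕ} (hk : 2 ≤ k) :
    ContinuousOn (fun z : ℝ => polyLi k (1 - z)) (Set.Icc 0 1) :=
  (continuousOn_polyLi hk).comp (by fun_prop)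
    fun z hz => ⟨by linarith [hz.2], by linarith [hz.1]⟩

lemma one_sub_inv_mem {z : ℝ} (hz : z ∈ Set.Icc (1 / 2 : ℝ) 1) :
    1 - z⁻¹ ∈ Set.Icc (-1 : ℝ) 0 := by
  have h0 : 0 < z := by linarith [hz.1]
  have h1 : z⁻¹ ≤ 2 := by
    rw [inv_le_comm₀ h0 two_pos]
    linarith [hz.1]
  have h2 : 1 ≤ z⁻¹ := (one_le_inv₀ h0).mpr hz.2
  exact ⟨by linarith, by linarith⟩

lemma continuousOn_polyLi_one_sub_inv {k : ℕ} (hk : 2 ≤ k) :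
    ContinuousOn (fun z : ℝ => polyLi k (1 - z⁻¹)) (Set.Icc (1 / 2) 1) := by
  refine (continuousOn_polyLi hk).comp
    (continuousOn_const.sub (continuousOn_inv₀.mono fun z hz => ?_))
    fun z hz => ⟨(one_sub_inv_mem hz).1, by linarith [(one_sub_inv_mem hz).2]⟩
  have : 0 < z := by linarith [hz.1]
  exact this.ne'

lemma hasDerivAt_polyLi_one_sub {k : ℕ} {z : ℝ} (h0 : 0 < z) (h1 : z < 1) :
    HasDerivAt (fun z : ℝ => polyLi (k + 1) (1 - z)) (-(polyLi k (1 - z) / (1 - z))) z := by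
  have h := hasDerivAt_polyLi (k := k) (x := 1 - z)
    (abs_lt.mpr ⟨by linarith, by linarith⟩) (by linarith)
  exact (h.comp z ((hasDerivAt_id z).const_sub 1)).congr_deriv (by ring)

lemma abs_one_sub_inv_lt {z : ℝ} (h0 : 1 / 2 < z) (h1 : z < 1) : |1 - z⁻¹| < 1 := by
  have h2 : z⁻¹ < 2 := by
    rw [inv_lt_comm₀ (by linarith) two_pos]
    linarith
  have h3 : 1 < z⁻¹ := (one_lt_inv₀ (by linarith)).mpr h1
  exact abs_lt.mpr ⟨by linarith, by linarith⟩

lemma hasDerivAt_polyLi_one_sub_inv {k : ℕ} {z : ℝ} (h0 : 1 / 2 < z) (h1 : z < 1) :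
    HasDerivAt (fun z : ℝ => polyLi (k + 1) (1 - z⁻¹))
      (-(polyLi k (1 - z⁻¹) / (z * (1 - z)))) z := by
  have hz : z ≠ 0 := by linarith
  have h3 : 1 < z⁻¹ := (one_lt_inv₀ (by linarith)).mpr h1
  have h := hasDerivAt_polyLi (k := k) (x := 1 - z⁻¹) (abs_one_sub_inv_lt h0 h1) (by linarith)
  refine (h.comp z ((hasDerivAt_inv hz).const_sub 1)).congr_deriv ?_
  have h4 : 1 - z ≠ 0 := by linarith
  have h5 : z - 1 ≠ 0 := by linarith
  rw [show 1 - z⁻¹ = (z - 1) / z by field_simp]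
  generalize polyLi k ((z - 1) / z) = p
  field_simp
  ring

lemma hasDerivAt_log_one_sub {z : ℝ} (h1 : z < 1) :
    HasDerivAt (fun z : ℝ => log (1 - z)) (-(1 / (1 - z))) z := by
  have h := ((hasDerivAt_id z).const_sub 1).log (by simp only [id]; linarith)
  exact h.congr_deriv (by simp [neg_div])

lemma polyLi_two_reflection {z : ℝ} (h0 : 0 < z) (h1 : z ≤ 1) :
    polyLi 2 z + polyLi 2 (1 - z) + log z * log (1 - z) = π ^ 2 / 6 := by
  have h := eq_at_one_of_hasDerivAt_zero
    (f := fun z => polyLi 2 z + polyLi 2 (1 - z) + log z * log (1 - z)) h1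
    ((((continuousOn_polyLi le_rfl).mono (Set.Icc_subset_Icc (by linarith) le_rfl)).add
      ((continuousOn_polyLi_one_sub le_rfl).mono (Set.Icc_subset_Icc h0.le le_rfl))).add
      (continuousOn_log_mul_log_one_sub.mono fun x hx => h0.trans_le hx.1))
    (fun x hx => by
      have hx0 : 0 < x := h0.trans hx.1
      have hx1 : x < 1 := hx.2
      have ha : |x| < 1 := abs_lt.mpr ⟨by linarith, hx1⟩
      have hb : |1 - x| < 1 := abs_lt.mpr ⟨by linarith, by linarith⟩
      refine (((hasDerivAt_polyLi (k := 1) ha hx0.ne').add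
        (hasDerivAt_polyLi_one_sub (k := 1) hx0 hx1)).add
        ((hasDerivAt_log hx0.ne').mul (hasDerivAt_log_one_sub hx1))).congr_deriv ?_
      rw [polyLi_one_left ha, polyLi_one_left hb, sub_sub_cancel]
      ring)
  simpa [polyLi_zero_right, polyLi_two_one] using h

lemma polyLi_two_landen {z : ℝ} (h0 : 1 / 2 ≤ z) (h1 : z ≤ 1) :
    polyLi 2 (1 - z) + polyLi 2 (1 - z⁻¹) + 1 / 2 * log z ^ 2 = 0 := by
  have hne : ∀ x ∈ Set.Icc z 1, x ≠ 0 := fun x hx => by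
    have := hx.1
    linarith
  have h := eq_at_one_of_hasDerivAt_zero
    (f := fun z => polyLi 2 (1 - z) + polyLi 2 (1 - z⁻¹) + 1 / 2 * log z ^ 2) h1
    ((((continuousOn_polyLi_one_sub le_rfl).mono (Set.Icc_subset_Icc (by linarith) le_rfl)).add
      ((continuousOn_polyLi_one_sub_inv le_rfl).mono (Set.Icc_subset_Icc h0 le_rfl))).add
      (continuousOn_const.mul ((continuousOn_log.mono hne).pow 2)))
    (fun x hx => by
      have hx2 : 1 / 2 < x := h0.trans_lt hx.1
      have hx0 : 0 < x := by linarith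
      have hx1 : x < 1 := hx.2
      have hb : |1 - x| < 1 := abs_lt.mpr ⟨by linarith, by linarith⟩
      refine (((hasDerivAt_polyLi_one_sub (k := 1) hx0 hx1).add
        (hasDerivAt_polyLi_one_sub_inv (k := 1) hx2 hx1)).add
        (((hasDerivAt_log hx0.ne').pow 2).const_mul (1 / 2))).congr_deriv ?_
      rw [polyLi_one_left hb, polyLi_one_left (abs_one_sub_inv_lt hx2 hx1), sub_sub_cancel,
        sub_sub_cancel, log_inv]
      have : 1 - x ≠ 0 := by linarith
      field_simp
      push_cast
      ring)
  simpa [polyLi_zero_right] using h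

lemma polyLi_three_landen {z : ℝ} (h0 : 1 / 2 ≤ z) (h1 : z ≤ 1) :
    polyLi 3 z + polyLi 3 (1 - z) + polyLi 3 (1 - z⁻¹) =
      zetaR 3 + 1 / 6 * log z ^ 3 + π ^ 2 / 6 * log z - 1 / 2 * log z ^ 2 * log (1 - z) := by
  have hne : ∀ x ∈ Set.Icc z 1, x ≠ 0 := fun x hx => by
    have := hx.1
    linarith
  have hlog : ContinuousOn log (Set.Icc z 1) := continuousOn_log.mono hne
  have hll := continuousOn_log_mul_log_one_sub.mono
    (show Set.Icc z 1 ⊆ Set.Ioi 0 from fun x hx => by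
      have := hx.1
      exact Set.mem_Ioi.mpr (by linarith))
  have hc1 := (continuousOn_polyLi (k := 3) (by norm_num)).mono
    (Set.Icc_subset_Icc (show (-1 : ℝ) ≤ z by linarith) le_rfl)
  have hc2 := (continuousOn_polyLi_one_sub (k := 3) (by norm_num)).mono
    (Set.Icc_subset_Icc (show (0 : ℝ) ≤ z by linarith) le_rfl)
  have hc3 := (continuousOn_polyLi_one_sub_inv (k := 3) (by norm_num)).mono
    (Set.Icc_subset_Icc h0 le_rfl)
  have h := eq_at_one_of_hasDerivAt_zero
    (f := fun z => polyLi 3 z + polyLi 3 (1 - z) + polyLi 3 (1 - z⁻¹) -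
      (1 / 6 * log z ^ 3 + π ^ 2 / 6 * log z - 1 / 2 * (log z * (log z * log (1 - z))))) h1
    (((hc1.add hc2).add hc3).sub (((continuousOn_const.mul (hlog.pow 3)).add
      (continuousOn_const.mul hlog)).sub (continuousOn_const.mul (hlog.mul hll))))
    (fun x hx => by
      have hx2 : 1 / 2 < x := h0.trans_lt hx.1
      have hx0 : 0 < x := by linarith
      have hx1 : x < 1 := hx.2
      have ha : |x| < 1 := abs_lt.mpr ⟨by linarith, hx1⟩
      have hl := hasDerivAt_log hx0.ne'
      refine ((((hasDerivAt_polyLi (k := 2) ha hx0.ne').add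
        (hasDerivAt_polyLi_one_sub (k := 2) hx0 hx1)).add
        (hasDerivAt_polyLi_one_sub_inv (k := 2) hx2 hx1)).sub
        ((((hl.pow 3).const_mul (1 / 6)).add (hl.const_mul (π ^ 2 / 6))).sub
          ((hl.mul (hl.mul (hasDerivAt_log_one_sub hx1))).const_mul (1 / 2)))).congr_deriv ?_
      have hR := polyLi_two_reflection hx0 hx1.le
      have hL := polyLi_two_landen hx2.le hx1.le
      have e1 : polyLi 2 x = π ^ 2 / 6 - polyLi 2 (1 - x) - log x * log (1 - x) := by linarith
      have e2 : polyLi 2 (1 - x⁻¹) = -polyLi 2 (1 - x) - 1 / 2 * log x ^ 2 := by linarith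
      rw [e1, e2]
      have : 1 - x ≠ 0 := by linarith
      simp only [Pi.mul_apply]
      generalize polyLi 2 (1 - x) = p
      field_simp
      push_cast
      ring)
  simp only [inv_one, sub_self, polyLi_zero_right, polyLi_three_one, log_one] at h
  linear_combination h

lemma polyLi_three_half :
    polyLi 3 (1 / 2) = 7 / 8 * zetaR 3 + 1 / 6 * log 2 ^ 3 - π ^ 2 / 12 * log 2 := by
  have h := polyLi_three_landen (z := 1 / 2) le_rfl (by norm_num)
  have hd := polyLi_three_sq (x := 1) (by norm_num)
  rw [one_pow, polyLi_three_one] at hd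
  have hl : log (1 / 2) = -log 2 := by rw [one_div, log_inv]
  rw [show (1 : ℝ) - 1 / 2 = 1 / 2 by norm_num, show (1 : ℝ) - (1 / 2)⁻¹ = -1 by norm_num, hl] at h
  linear_combination h / 2 + hd / 8

/-- `Li₃(1/3) + (1/4)·Li₃(1/4) + Li₃(2/3) = (15/8)·ζ(3) + (1/6)·(log 2)³ − (π²/12)·log 2
  − (1/6)·(log(3/2))³ + (1/2)·log 3·(log(3/2))² − (π²/6)·log(3/2)`. -/
theorem Li3_identity_two :
    Li3 (1 / 3) + 1 / 4 * Li3 (1 / 4) + Li3 (2 / 3) =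
      15 / 8 * zetaR 3 + 1 / 6 * (Real.log 2) ^ 3 - π ^ 2 / 12 * Real.log 2 -
        1 / 6 * (Real.log (3 / 2)) ^ 3 + 1 / 2 * Real.log 3 * (Real.log (3 / 2)) ^ 2 -
        π ^ 2 / 6 * Real.log (3 / 2) := by
  change polyLi 3 (1 / 3) + 1 / 4 * polyLi 3 (1 / 4) + polyLi 3 (2 / 3) = _
  have h := polyLi_three_landen (z := 2 / 3) (by norm_num) (by norm_num)
  have hd := polyLi_three_sq (x := 1 / 2) (by rw [abs_of_pos] <;> norm_num)
  have hl1 : log (2 / 3) = -log (3 / 2) := by rw [← log_inv]; norm_num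
  have hl2 : log (1 / 3) = -log 3 := by rw [one_div, log_inv]
  rw [show (1 : ℝ) - 2 / 3 = 1 / 3 by norm_num, show (1 : ℝ) - (2 / 3)⁻¹ = -(1 / 2) by norm_num,
    hl1, hl2] at h
  rw [show (1 / 2 : ℝ) ^ 2 = 1 / 4 by norm_num] at hd
  linear_combination h + hd / 4 + polyLi_three_half
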